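/- arXiv:1401.6450 — 2 statements merged into one kernel-verified Lean document; each statement's English description precedes it below -/
import Mathlib

section
/- The pair (X, Y) is conditionally mixing if and only if for almost every y under the law of Y, the conditional measure P^y is mixing, i.e., for every finite V ⊂ ℤ^d and every measurable A ⊆ Ω, E^{P^y}| P^y[X_V ∈ A | σ(X_w : w ∉ W)] − P^y[X_V ∈ A] | → 0 along the net of finite W ⊂ ℤ^d directed by inclusion. -/
open MeasureTheory Filter

noncomputable section

namespace RandomField

/-- Sites of the lattice `ℤ^d`. -/
abbrev Site (d : ℕ) := Fin d → ℤ

variable {E : Type*} [MeasurableSpace E] {d : ℕ}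

/-- Configurations `E^{ℤ^d}`. -/
abbrev Conf (E : Type*) (d : ℕ) := Site d → E

/-- The cylinder σ-algebra `σ(X_S)` on `E^{ℤ^d}` generated by the coordinates in `S`. -/
def cylσ (E : Type*) [MeasurableSpace E] {d : ℕ} (S : Set (Site d)) :
    MeasurableSpace (Conf E d) :=
  ⨆ v ∈ S, MeasurableSpace.comap (fun x : Conf E d => x v) inferInstance

/-- Nearest neighbors: `‖v - w‖ = 1`. -/
def Adj (v w : Site d) : Prop := (∑ i, (v i - w i).natAbs) = 1

/-- The exterior boundary `∂V` of a finite set of sites `V`. -/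
def bdry (V : Finset (Site d)) : Set (Site d) := {w | w ∉ V ∧ ∃ v ∈ V, Adj v w}

/-- A specification: a family of probability kernels `γ_V` indexed by finite `V ⊂ ℤ^d` with
(1) `γ_V(·, A)` is `σ(X_{∂V})`-measurable for `A ∈ σ(X_V)`;
(2) `γ_V(x, A) = 1_A(x)` for `A ∈ σ(X_{V^c})`;
(3) `γ_V γ_W = γ_V` for `W ⊆ V`. -/
structure IsSpecification (γ : Finset (Site d) → Conf E d → Measure (Conf E d)) : Prop where
  prob : ∀ V x, IsProbabilityMeasure (γ V x)
  kernel : ∀ (V) (A : Set (Conf E d)), MeasurableSet A → Measurable fun x => γ V x A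
  bdryMeas : ∀ (V : Finset (Site d)) (A : Set (Conf E d)),
    MeasurableSet[cylσ E (↑V : Set (Site d))] A →
    Measurable[cylσ E (bdry V)] fun x => γ V x A
  proper : ∀ (V : Finset (Site d)) (A : Set (Conf E d)),
    MeasurableSet[cylσ E ((↑V : Set (Site d))ᶜ)] A →
    ∀ x, γ V x A = A.indicator (fun _ => (1 : ENNReal)) x
  consistent : ∀ V W : Finset (Site d), W ⊆ V → ∀ (A : Set (Conf E d)), MeasurableSet A →
    ∀ x, ∫⁻ z, γ W z A ∂(γ V x) = γ V x A

/-- The σ-algebra `σ(X_w : w ∉ V)` on the underlying probability space. -/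
def outsideσ {Ω : Type*} [MeasurableSpace Ω] (X : Ω → Conf E d) (V : Finset (Site d)) :
    MeasurableSpace Ω :=
  ⨆ w ∈ ((↑V : Set (Site d))ᶜ), MeasurableSpace.comap (fun ω => X ω w) inferInstance

/-- Mixing of a measure `μ` on `E^{ℤ^d}`:
`E|μ[X_V ∈ A | X_{W^c}] − μ[X_V ∈ A]| → 0` along the net of finite `W` directed by
inclusion, for every finite `V` and `A ∈ σ(X_V)`. -/
def MeasMixing (μ : Measure (Conf E d)) : Prop :=
  ∀ (V : Finset (Site d)) (A : Set (Conf E d)),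
    MeasurableSet[cylσ E (↑V : Set (Site d))] A →
    Tendsto (fun W : Finset (Site d) =>
        ∫ z, |(μ[A.indicator (fun _ => (1 : ℝ))|cylσ E ((↑W : Set (Site d))ᶜ)]) z
            - (μ A).toReal| ∂μ)
      atTop (nhds 0)

/-- Conditional mixing of the pair `(X, Y)`:
`E|P[X_V ∈ A | X_{W^c}, Y] − P[X_V ∈ A | Y]| → 0` along the net of finite `W` directed by
inclusion, for every finite `V` and `A ∈ σ(X_V)`. -/
def CondMixing {Ω : Type*} [MeasurableSpace Ω] {F : Type*} [MeasurableSpace F]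
    (P : Measure Ω) (X : Ω → Conf E d) (Y : Ω → Site d → F) : Prop :=
  ∀ (V : Finset (Site d)) (A : Set (Conf E d)),
    MeasurableSet[cylσ E (↑V : Set (Site d))] A →
    Tendsto (fun W : Finset (Site d) =>
        ∫ ω, |(P[(fun ω' => A.indicator (fun _ => (1 : ℝ)) (X ω'))|
                  outsideσ X W ⊔ MeasurableSpace.comap Y inferInstance]) ω
            - (P[(fun ω' => A.indicator (fun _ => (1 : ℝ)) (X ω'))|
                  MeasurableSpace.comap Y inferInstance]) ω| ∂P)
      atTop (nhds 0)

open ProbabilityTheory in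
lemma integrable_integral_compProd {𝓨 𝓧 : Type*} [MeasurableSpace 𝓨] [MeasurableSpace 𝓧]
    {ν : Measure 𝓨} [IsProbabilityMeasure ν] {κ : Kernel 𝓨 𝓧} [IsMarkovKernel κ]
    {g : 𝓨 × 𝓧 → ℝ} (hg : Integrable g (Measure.compProd ν κ)) :
    Integrable (fun y => ∫ x, g (y, x) ∂(κ y)) ν := by
  have := Integrable.integral_compProd hg
  simpa using this

open ProbabilityTheory in
lemma law_eq {Ω 𝓨 𝓧 : Type*} [MeasurableSpace Ω] [MeasurableSpace 𝓨] [MeasurableSpace 𝓧]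
    (P : Measure Ω) [IsProbabilityMeasure P] (X : Ω → 𝓧) (Y : Ω → 𝓨)
    (hX : Measurable X) (hY : Measurable Y) (κ : Kernel 𝓨 𝓧) [IsMarkovKernel κ]
    (hκ : ∀ A : Set 𝓧, MeasurableSet A →
      (fun ω => (κ (Y ω) A).toReal) =ᵐ[P]
        P[(fun ω => A.indicator (fun _ => (1 : ℝ)) (X ω))|
          MeasurableSpace.comap Y inferInstance]) :
    P.map (fun ω => (Y ω, X ω)) = Measure.compProd (P.map Y) κ := by
  have : IsProbabilityMeasure (P.map Y) := Measure.isProbabilityMeasure_map hY.aemeasurable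
  have : IsProbabilityMeasure (P.map (fun ω => (Y ω, X ω))) :=
    Measure.isProbabilityMeasure_map (by fun_prop)
  refine Measure.ext_prod ?_
  intro s t hs ht
  have hf : (fun ω => t.indicator (fun _ => (1 : ℝ)) (X ω))
      = (X ⁻¹' t).indicator (fun _ => (1 : ℝ)) := rfl
  have hfi : Integrable (fun ω => t.indicator (fun _ => (1 : ℝ)) (X ω)) P := by
    rw [hf]; exact (integrable_const 1).indicator (hX ht)
  rw [Measure.compProd_apply_prod hs ht, setLIntegral_map hs (κ.measurable_coe ht) hY,
    Measure.map_apply (by fun_prop) (hs.prod ht)]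
  have h1 : ∫ ω in Y ⁻¹' s, (κ (Y ω) t).toReal ∂P
      = ∫ ω in Y ⁻¹' s, t.indicator (fun _ => (1 : ℝ)) (X ω) ∂P := by
    rw [← setIntegral_condExp hY.comap_le hfi ⟨s, hs, rfl⟩]
    exact integral_congr_ae (ae_restrict_of_ae (hκ t ht))
  rw [integral_toReal (by exact ((κ.measurable_coe ht).comp hY).aemeasurable)
    (by simp), hf, integral_indicator (hX ht), Measure.restrict_restrict (hX ht)] at h1
  have h2 : ∫⁻ ω in Y ⁻¹' s, κ (Y ω) t ∂P ≠ ⊤ := by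
    refine ne_of_lt (lt_of_le_of_lt (lintegral_mono (fun ω => prob_le_one)) ?_)
    simp
  rw [← ENNReal.toReal_eq_toReal_iff' (measure_ne_top _ _) h2, h1]
  simp only [integral_const, smul_eq_mul, mul_one, measureReal_def, Measure.restrict_apply_univ]
  rw [Set.mk_preimage_prod, Set.inter_comm]

lemma exists_countable_pi {𝓧 : Type*} (m : MeasurableSpace 𝓧)
    (hm : @MeasurableSpace.CountablyGenerated 𝓧 m) :
    ∃ S : Set (Set 𝓧), S.Countable ∧ IsPiSystem S ∧ Set.univ ∈ S ∧
      m = MeasurableSpace.generateFrom S := by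
  obtain ⟨b, hb, h⟩ := hm.isCountablyGenerated
  refine ⟨generateSetAlgebra b, countable_generateSetAlgebra hb, ?_,
    isSetAlgebra_generateSetAlgebra.univ_mem, ?_⟩
  · intro s hs t ht _
    exact isSetAlgebra_generateSetAlgebra.inter_mem hs ht
  · rw [generateFrom_generateSetAlgebra_eq, h]

open ProbabilityTheory in
lemma sections_condExp {𝓨 𝓧 : Type*} (m : MeasurableSpace 𝓧) [mY : MeasurableSpace 𝓨]
    [mX : MeasurableSpace 𝓧]
    (ν : Measure 𝓨) [IsProbabilityMeasure ν] (κ : Kernel 𝓨 𝓧) [IsMarkovKernel κ]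
    (hmX : m ≤ mX)
    (hm : @MeasurableSpace.CountablyGenerated 𝓧 m) (f : 𝓧 → ℝ)
    (hf : ∀ y, Integrable f (κ y))
    (hf2 : Integrable (fun z : 𝓨 × 𝓧 => f z.2) (Measure.compProd ν κ))
    (h : 𝓨 × 𝓧 → ℝ) (hh : StronglyMeasurable[@Prod.instMeasurableSpace _ _ mY m] h)
    (hhi : Integrable h (Measure.compProd ν κ))
    (hset : ∀ C B, MeasurableSet C → MeasurableSet[m] B →
      ∫ z in C ×ˢ B, h z ∂(Measure.compProd ν κ)
        = ∫ z in C ×ˢ B, f z.2 ∂(Measure.compProd ν κ)) :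
    ∀ᵐ y ∂ν, (fun x => h (y, x)) =ᵐ[κ y] (κ y)[f|m] := by
  obtain ⟨S, hSc, hSpi, hSu, hS⟩ := exists_countable_pi m hm
  have hSm : ∀ B ∈ S, MeasurableSet[m] B := fun B hB => by
    rw [hS]; exact MeasurableSpace.measurableSet_generateFrom hB
  have hi : ∀ᵐ y ∂ν, Integrable (fun x => h (y, x)) (κ y) :=
    ((Measure.integrable_compProd_iff hhi.1).1 hhi).1
  have key : ∀ B ∈ S, ∀ᵐ y ∂ν, ∫ x in B, h (y, x) ∂(κ y) = ∫ x in B, f x ∂(κ y) := by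
    intro B hB
    have hBm := hmX _ (hSm B hB)
    have e : ∀ g : 𝓨 × 𝓧 → ℝ, Integrable g (Measure.compProd ν κ) →
        Integrable (fun y => ∫ x in B, g (y, x) ∂(κ y)) ν := by
      intro g hg
      have := integrable_integral_compProd
        (hg.indicator (MeasurableSet.univ.prod hBm : MeasurableSet (Set.univ ×ˢ B)))
      refine this.congr (ae_of_all _ fun y => ?_)
      simp only
      rw [← integral_indicator hBm]
      refine integral_congr_ae (ae_of_all _ fun x => ?_)
      by_cases hx : x ∈ B <;> simp [hx]
    refine Integrable.ae_eq_of_forall_setIntegral_eq _ _ (e h hhi)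
      (e (fun z => f z.2) hf2) ?_
    intro C hC _
    have := hset C B hC (hSm B hB)
    rwa [Measure.setIntegral_compProd hC hBm hhi.integrableOn,
      Measure.setIntegral_compProd hC hBm hf2.integrableOn] at this
  have key2 := (ae_ball_iff hSc).2 key
  filter_upwards [hi, key2] with y hiy hy
  refine ae_eq_condExp_of_forall_setIntegral_eq hmX (hf y) (fun s _ _ => hiy.integrableOn) ?_ ?_
  · intro s hs _
    refine MeasurableSpace.induction_on_inter (m := m) (C := fun s _ =>
      ∫ x in s, h (y, x) ∂(κ y) = ∫ x in s, f x ∂(κ y)) hS hSpi ?_ ?_ ?_ ?_ s hs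
    · simp
    · exact fun t ht => hy t ht
    · intro t ht hte
      have a1 := integral_add_compl (hmX _ ht) hiy
      have a2 := integral_add_compl (hmX _ ht) (hf y)
      have a3 := hy _ hSu
      simp only [Measure.restrict_univ] at a3
      linarith
    · intro t hd ht hte
      rw [integral_iUnion (fun i => hmX _ (ht i)) hd hiy.integrableOn,
        integral_iUnion (fun i => hmX _ (ht i)) hd (hf y).integrableOn]
      exact tsum_congr hte
  · refine StronglyMeasurable.aestronglyMeasurable ?_
    exact hh.comp_measurable (@measurable_prodMk_left _ _ mY m y)

open ProbabilityTheory in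
lemma key_identity {Ω 𝓨 𝓧 : Type*} (m : MeasurableSpace 𝓧) [MeasurableSpace Ω] [mY : MeasurableSpace 𝓨]
    [mX : MeasurableSpace 𝓧]
    (P : Measure Ω) [IsProbabilityMeasure P] (X : Ω → 𝓧) (Y : Ω → 𝓨)
    (hX : Measurable X) (hY : Measurable Y) (κ : Kernel 𝓨 𝓧) [IsMarkovKernel κ]
    (hκ : ∀ A : Set 𝓧, MeasurableSet A →
      (fun ω => (κ (Y ω) A).toReal) =ᵐ[P]
        P[(fun ω => A.indicator (fun _ => (1 : ℝ)) (X ω))|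
          MeasurableSpace.comap Y inferInstance])
    (hmX : m ≤ mX)
    (hm : @MeasurableSpace.CountablyGenerated 𝓧 m) (A : Set 𝓧) (hA : MeasurableSet A) :
    Integrable (fun y => ∫ z, |((κ y)[A.indicator (fun _ => (1 : ℝ))|m]) z
        - (κ y A).toReal| ∂(κ y)) (P.map Y) ∧
    ∫ ω, |(P[(fun ω' => A.indicator (fun _ => (1 : ℝ)) (X ω'))|
                  MeasurableSpace.comap X m ⊔ MeasurableSpace.comap Y mY]) ω
            - (P[(fun ω' => A.indicator (fun _ => (1 : ℝ)) (X ω'))|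
                  MeasurableSpace.comap Y mY]) ω| ∂P
     = ∫ y, (∫ z, |((κ y)[A.indicator (fun _ => (1 : ℝ))|m]) z
        - (κ y A).toReal| ∂(κ y)) ∂(P.map Y) := by
  have : IsProbabilityMeasure (P.map Y) := Measure.isProbabilityMeasure_map hY.aemeasurable
  have hlaw := law_eq P X Y hX hY κ hκ
  have hT : Measurable (fun ω => (Y ω, X ω)) := by fun_prop
  have hfm : Measurable (A.indicator (fun _ => (1 : ℝ))) := measurable_const.indicator hA
  have hprodle : @Prod.instMeasurableSpace _ _ mY m ≤ @Prod.instMeasurableSpace _ _ mY mX :=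
    sup_le_sup le_rfl (MeasurableSpace.comap_mono hmX)
  have hσ : MeasurableSpace.comap X m ⊔ MeasurableSpace.comap Y mY
      = MeasurableSpace.comap (fun ω => (Y ω, X ω)) (@Prod.instMeasurableSpace _ _ mY m) := by
    have e : @Prod.instMeasurableSpace _ _ mY m =
      MeasurableSpace.comap Prod.fst mY ⊔ MeasurableSpace.comap Prod.snd m := rfl
    rw [e, MeasurableSpace.comap_sup,
      MeasurableSpace.comap_comp, MeasurableSpace.comap_comp, sup_comm]
    rfl
  have hσle : MeasurableSpace.comap (fun ω => (Y ω, X ω)) (@Prod.instMeasurableSpace _ _ mY m)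
      ≤ ‹MeasurableSpace Ω› := (MeasurableSpace.comap_mono hprodle).trans hT.comap_le
  rw [hσ]
  have hfi : Integrable (fun ω => A.indicator (fun _ => (1 : ℝ)) (X ω)) P :=
    (integrable_const (1 : ℝ)).indicator (hX hA)
  obtain ⟨h, hh, hheq⟩ := StronglyMeasurable.exists_eq_measurable_comp
    (mY := @Prod.instMeasurableSpace _ _ mY m)
    (stronglyMeasurable_condExp (μ := P) (f := fun ω => A.indicator (fun _ => (1 : ℝ)) (X ω))
      (m := MeasurableSpace.comap (fun ω => (Y ω, X ω)) (@Prod.instMeasurableSpace _ _ mY m)))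
  have hh' : StronglyMeasurable h := hh.mono hprodle
  have hhi : Integrable h (Measure.compProd (P.map Y) κ) := by
    rw [← hlaw, integrable_map_measure hh'.aestronglyMeasurable hT.aemeasurable, ← hheq]
    exact integrable_condExp
  have hf2 : Integrable (fun z : 𝓨 × 𝓧 => A.indicator (fun _ => (1 : ℝ)) z.2)
      (Measure.compProd (P.map Y) κ) :=
    (integrable_const (1 : ℝ)).indicator (measurable_snd hA)
  have hsec := sections_condExp m (P.map Y) κ hmX hm (A.indicator (fun _ => (1 : ℝ)))
    (fun y => (integrable_const (1 : ℝ)).indicator hA) hf2 h hh hhi (by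
      intro C B hC hB
      have hCB : MeasurableSet (C ×ˢ B) := hC.prod (hmX _ hB)
      rw [← hlaw, setIntegral_map hCB hh'.aestronglyMeasurable hT.aemeasurable,
        setIntegral_map hCB (by exact (hfm.comp measurable_snd).aestronglyMeasurable)
          hT.aemeasurable]
      have := setIntegral_condExp hσle hfi
        (s := (fun ω => (Y ω, X ω)) ⁻¹' (C ×ˢ B))
        ⟨C ×ˢ B, @MeasurableSet.prod _ _ mY m _ _ hC hB, rfl⟩
      rw [hheq] at this
      exact this)
  have hκA : Measurable (fun z : 𝓨 × 𝓧 => (κ z.1 A).toReal) :=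
    ((κ.measurable_coe hA).comp measurable_fst).ennreal_toReal
  have hGi : Integrable (fun z : 𝓨 × 𝓧 => |h z - (κ z.1 A).toReal|)
      (Measure.compProd (P.map Y) κ) := by
    refine (hhi.sub (Integrable.of_bound hκA.aestronglyMeasurable 1 ?_)).abs
    refine ae_of_all _ fun z => ?_
    rw [Real.norm_of_nonneg ENNReal.toReal_nonneg]
    exact ENNReal.toReal_le_of_le_ofReal zero_le_one (by simpa using prob_le_one)
  have hae : (fun y => ∫ x, |h (y, x) - (κ y A).toReal| ∂(κ y)) =ᵐ[P.map Y]
      (fun y => ∫ z, |((κ y)[A.indicator (fun _ => (1 : ℝ))|m]) z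
        - (κ y A).toReal| ∂(κ y)) := by
    filter_upwards [hsec] with y hy
    refine integral_congr_ae ?_
    filter_upwards [hy] with x hx
    rw [hx]
  refine ⟨(integrable_integral_compProd hGi).congr hae, ?_⟩
  rw [← integral_congr_ae hae, ← Measure.integral_compProd hGi, ← hlaw,
    integral_map hT.aemeasurable (by rw [hlaw]; exact hGi.1)]
  refine integral_congr_ae ?_
  filter_upwards [hκ A hA] with ω hω
  rw [← hω, hheq]
  rfl

lemma cylσ_le (S : Set (Site d)) : cylσ E S ≤ (inferInstance : MeasurableSpace (Conf E d)) :=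
  iSup₂_le fun v _ => (measurable_pi_apply v).comap_le

lemma cylσ_mono {S T : Set (Site d)} (h : S ⊆ T) : cylσ E S ≤ cylσ E T :=
  biSup_mono h

lemma outsideσ_eq {Ω : Type*} [MeasurableSpace Ω] (X : Ω → Conf E d) (V : Finset (Site d)) :
    outsideσ X V = MeasurableSpace.comap X (cylσ E ((↑V : Set (Site d))ᶜ)) := by
  simp only [outsideσ, cylσ, MeasurableSpace.comap_iSup, MeasurableSpace.comap_comp]
  rfl

lemma cylσ_countablyGenerated [Fintype E] (S : Set (Site d)) :
    @MeasurableSpace.CountablyGenerated _ (cylσ E S) := by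
  refine @MeasurableSpace.CountablyGenerated.mk _ (cylσ E S)
    ⟨⋃ v ∈ S, {A | MeasurableSet[MeasurableSpace.comap (fun x : Conf E d => x v) inferInstance] A},
      ?_, ?_⟩
  · refine Set.Countable.biUnion (Set.to_countable S) fun v _ => ?_
    refine Set.Countable.mono ?_ (Set.countable_range
      (fun B : Set E => (fun x : Conf E d => x v) ⁻¹' B))
    rintro A ⟨B, _, rfl⟩
    exact ⟨B, rfl⟩
  · rw [cylσ]
    refine le_antisymm (iSup₂_le fun v hv A hA => ?_) (MeasurableSpace.generateFrom_le ?_)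
    · exact MeasurableSpace.measurableSet_generateFrom (Set.mem_biUnion hv hA)
    · intro A hA
      obtain ⟨v, hv, hA⟩ := Set.mem_iUnion₂.1 hA
      exact (le_iSup₂_of_le (f := fun v (_ : v ∈ S) =>
        MeasurableSpace.comap (fun x : Conf E d => x v) inferInstance) v hv le_rfl) A hA

lemma cylσ_countable [Fintype E] (V : Finset (Site d)) :
    {A : Set (Conf E d) | MeasurableSet[cylσ E (↑V : Set (Site d))] A}.Countable := by
  have hle : cylσ E (↑V : Set (Site d)) ≤
      MeasurableSpace.comap (fun (x : Conf E d) (v : V) => x v) ⊤ := by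
    refine iSup₂_le fun v hv => ?_
    rintro _ ⟨B, _, rfl⟩
    exact ⟨{z | z ⟨v, hv⟩ ∈ B}, trivial, rfl⟩
  refine Set.Countable.mono ?_ (Set.countable_range
      (fun B : Set (V → E) => (fun (x : Conf E d) (v : V) => x v) ⁻¹' B))
  intro A hA
  obtain ⟨B, _, rfl⟩ := hle A hA
  exact ⟨B, rfl⟩

lemma mix_antitone {𝓧 : Type*} (m m' : MeasurableSpace 𝓧) [mX : MeasurableSpace 𝓧]
    (μ : Measure 𝓧) [IsProbabilityMeasure μ] (h : m' ≤ m) (hm : m ≤ mX) (f : 𝓧 → ℝ) (c : ℝ) :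
    ∫ z, |(μ[f|m']) z - c| ∂μ ≤ ∫ z, |(μ[f|m]) z - c| ∂μ := by
  have e : (fun z => (μ[f|m']) z - c) =ᵐ[μ] μ[(fun z => (μ[f|m]) z - c)|m'] := by
    have h1 := condExp_sub (μ := μ) (m := m') (f := μ[f|m]) (g := fun _ => c)
      integrable_condExp (integrable_const c)
    have h2 := condExp_condExp_of_le (μ := μ) (f := f) h hm
    have h3 := condExp_const (μ := μ) (h.trans hm) c
    refine EventuallyEq.trans ?_ h1.symm
    filter_upwards [h2] with z hz
    simp [hz, h3]
  calc _ = ∫ z, |(μ[(fun z => (μ[f|m]) z - c)|m']) z| ∂μ := by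
        refine integral_congr_ae ?_
        filter_upwards [e] with z hz
        rw [← hz]
    _ ≤ _ := integral_abs_condExp_le _

lemma tendsto_iff_ae {𝓨 ι : Type*} [MeasurableSpace 𝓨] [Preorder ι] [IsDirectedOrder ι]
    [Nonempty ι] [Countable ι] (ν : Measure 𝓨) [IsProbabilityMeasure ν] (a : ι → 𝓨 → ℝ)
    (hi : ∀ i, Integrable (a i) ν) (h0 : ∀ i y, 0 ≤ a i y) (ha : ∀ i j, i ≤ j → ∀ y, a j y ≤ a i y) :
    Tendsto (fun i => ∫ y, a i y ∂ν) atTop (nhds 0) ↔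
      ∀ᵐ y ∂ν, Tendsto (fun i => a i y) atTop (nhds 0) := by
  constructor
  · intro h
    have key : ∀ n : ℕ, ∀ᵐ y ∂ν, ∃ i, a i y < 1 / ((n : ℝ) + 1) := by
      intro n
      have hn : (0 : ℝ) < 1 / ((n : ℝ) + 1) := by positivity
      rw [ae_iff]
      push Not
      have hle : ∀ i, 1 / ((n : ℝ) + 1) * ν.real {y | ∀ i, 1 / ((n : ℝ) + 1) ≤ a i y}
          ≤ ∫ y, a i y ∂ν := by
        intro i
        refine le_trans ?_ (mul_meas_ge_le_integral_of_nonneg (ae_of_all _ (h0 i)) (hi i) (1 / ((n : ℝ) + 1)))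
        refine mul_le_mul_of_nonneg_left (measureReal_mono (fun y hy => hy i)) hn.le
      have := ge_of_tendsto' h hle
      have h3 : ν.real {y | ∀ i, 1 / ((n : ℝ) + 1) ≤ a i y} = 0 := by
        refine le_antisymm ?_ measureReal_nonneg
        by_contra hc
        push Not at hc
        exact absurd this (not_le.2 (mul_pos hn hc))
      simpa using (measureReal_eq_zero_iff).1 h3
    filter_upwards [ae_all_iff.2 key] with y hy
    refine tendsto_order.2 ⟨fun b hb => Eventually.of_forall fun i => hb.trans_le (h0 i y), ?_⟩
    intro b hb
    obtain ⟨n, hn⟩ := exists_nat_one_div_lt hb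
    obtain ⟨i, hi⟩ := hy n
    filter_upwards [eventually_ge_atTop i] with j hj
    exact (ha i j hj y).trans_lt (hi.trans hn)
  · intro h
    obtain ⟨i₀⟩ := ‹Nonempty ι›
    have := tendsto_integral_filter_of_dominated_convergence (μ := ν) (l := atTop)
      (F := a) (f := fun _ => (0 : ℝ)) (a i₀) (Eventually.of_forall fun i => (hi i).1)
      (by
        filter_upwards [eventually_ge_atTop i₀] with j hj
        refine ae_of_all _ fun y => ?_
        rw [Real.norm_of_nonneg (h0 j y)]
        exact ha _ _ hj y) (hi i₀) h
    simpa using this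

/-- **Proposition 5.6(3).**  For a hidden Markov random field with local nondegenerate
observations, `(X, Y)` is conditionally mixing if and only if, for almost every `y` under
the law of `Y`, the regular conditional distribution `P^y = P[X ∈ · | Y = y]` is mixing. -/
theorem statement15 [Fintype E] {F : Type*} [MeasurableSpace F] [StandardBorelSpace F]
    {Ω : Type*} [MeasurableSpace Ω] (P : Measure Ω) [IsProbabilityMeasure P]
    (γ : Finset (Site d) → Conf E d → Measure (Conf E d)) (hγ : IsSpecification γ)
    (φ : Measure F) [SigmaFinite φ]
    (g : Site d → E → F → ℝ) (hgm : ∀ v, Measurable (Function.uncurry (g v)))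
    (hgpos : ∀ v e y, 0 < g v e y) (hgint : ∀ v e, ∫ y, g v e y ∂φ = 1)
    (X : Ω → Conf E d) (hXm : Measurable X)
    (hXspec : ∀ (V : Finset (Site d)) (A : Set (Conf E d)), MeasurableSet A →
      (fun ω => (γ V (X ω) A).toReal) =ᵐ[P]
        P[(fun ω => A.indicator (fun _ => (1 : ℝ)) (X ω))|outsideσ X V])
    (Y : Ω → Site d → F) (hYm : Measurable Y)
    (hobs : ∀ (S : Finset (Site d)) (B : Site d → Set F), (∀ v, MeasurableSet (B v)) →
      P[(fun ω => Set.indicator {ω' | ∀ v ∈ S, Y ω' v ∈ B v} (fun _ => (1 : ℝ)) ω)|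
          MeasurableSpace.comap X inferInstance] =ᵐ[P]
        fun ω => ∏ v ∈ S, ∫ y in B v, g v (X ω v) y ∂φ)
    (κ : (Site d → F) → Measure (Conf E d))
    (hκprob : ∀ y, IsProbabilityMeasure (κ y))
    (hκmeas : ∀ A : Set (Conf E d), MeasurableSet A → Measurable fun y => κ y A)
    (hκcond : ∀ A : Set (Conf E d), MeasurableSet A →
      (fun ω => (κ (Y ω) A).toReal) =ᵐ[P]
        P[(fun ω => A.indicator (fun _ => (1 : ℝ)) (X ω))|
          MeasurableSpace.comap Y inferInstance]) :
    CondMixing P X Y ↔ ∀ᵐ y ∂(P.map Y), MeasMixing (κ y) := by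
  let K : ProbabilityTheory.Kernel (Site d → F) (Conf E d) :=
    ⟨κ, Measure.measurable_of_measurable_coe _ hκmeas⟩
  have : ProbabilityTheory.IsMarkovKernel K := ⟨hκprob⟩
  have : IsProbabilityMeasure (P.map Y) := Measure.isProbabilityMeasure_map hYm.aemeasurable
  have main : ∀ (V : Finset (Site d)) (A : Set (Conf E d)),
      MeasurableSet[cylσ E (↑V : Set (Site d))] A →
      (Tendsto (fun W : Finset (Site d) =>
        ∫ ω, |(P[(fun ω' => A.indicator (fun _ => (1 : ℝ)) (X ω'))|
                  outsideσ X W ⊔ MeasurableSpace.comap Y inferInstance]) ω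
            - (P[(fun ω' => A.indicator (fun _ => (1 : ℝ)) (X ω'))|
                  MeasurableSpace.comap Y inferInstance]) ω| ∂P)
      atTop (nhds 0) ↔ ∀ᵐ y ∂(P.map Y), Tendsto (fun W : Finset (Site d) =>
        ∫ z, |((κ y)[A.indicator (fun _ => (1 : ℝ))|cylσ E ((↑W : Set (Site d))ᶜ)]) z
            - (κ y A).toReal| ∂(κ y))
      atTop (nhds 0)) := by
    intro V A hA
    have hA' := cylσ_le _ A hA
    have hk := fun W : Finset (Site d) => key_identity
      (cylσ E ((↑W : Set (Site d))ᶜ)) P X Y hXm hYm K hκcond (cylσ_le _) (cylσ_countablyGenerated _) A hA'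
    have ht := tendsto_iff_ae (P.map Y) _ (fun W => (hk W).1)
      (fun W y => integral_nonneg fun _ => abs_nonneg _)
      (fun W W' h y => mix_antitone _ _ (κ y)
        (cylσ_mono (Set.compl_subset_compl.2 (by exact_mod_cast h))) (cylσ_le _) _ _)
    refine Iff.trans ?_ ht
    simp only [outsideσ_eq]
    exact iff_of_eq (congrArg (fun u => Tendsto u atTop (nhds 0)) (funext fun W => (hk W).2))
  unfold CondMixing MeasMixing
  rw [ae_all_iff]
  refine forall_congr' fun V => ?_
  refine Iff.trans ?_ (ae_ball_iff (cylσ_countable V)).symm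
  exact forall_congr' fun A => forall_congr' fun hA => main V A hA

end RandomField
end
end

section
/- Suppose the specification γ is monotone. Then there exist probability measures P_− and P_+ on Ω, both specified by γ, such that for every bounded increasing local function f : Ω → ℝ: the net V ↦ (γ_V f)(𝐛−) over finite V ⊂ ℤ^d directed by inclusion is increasing with limit E_{P_−}[f], the net V ↦ (γ_V f)(𝐛+) is decreasing with limit E_{P_+}[f], and E_{P_−}[f] ≤ E_P[f] ≤ E_{P_+}[f] for every probability measure P specified by γ. Moreover, there is exactly one probability measure specified by γ if and only if P_+ = P_−. -/
open MeasureTheory Filter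

noncomputable section

namespace RandomField

variable {E : Type*} [MeasurableSpace E] {d : ℕ}

/-- The two-point spin space `{-1, 1} ⊆ ℝ`. -/
abbrev Spin : Type := ({-1, 1} : Set ℝ)

/-- Spin configurations `{-1,1}^{ℤ^d}`, with the pointwise partial order. -/
abbrev SConf (d : ℕ) := Site d → Spin

/-- Boundedness of a real-valued function. -/
def Bdd {α : Type*} (f : α → ℝ) : Prop := ∃ C, ∀ x, |f x| ≤ C

/-- A local function: one depending on only finitely many coordinates. -/
def IsLocal {d : ℕ} (f : SConf d → ℝ) : Prop :=
  ∃ S : Finset (Site d), ∀ x z : SConf d, (∀ v ∈ S, x v = z v) → f x = f z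

/-- A specification is monotone if `γ_V f` is increasing for every bounded
(measurable) increasing `f` and every finite `V`. -/
def MonotoneSpec {d : ℕ} (γ : Finset (Site d) → SConf d → Measure (SConf d)) : Prop :=
  ∀ (V : Finset (Site d)) (f : SConf d → ℝ), Measurable f → Monotone f → Bdd f →
    Monotone fun x => ∫ z, f z ∂(γ V x)

/-- `μ` is specified by `δ`: `∫_B δ_V(x, A) μ(dx) = μ(A ∩ B)` for every finite `V`,
measurable `A`, and `B ∈ σ(X_{V^c})`. -/
def SpecifiedBy {d : ℕ} (δ : Finset (Site d) → SConf d → Measure (SConf d))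
    (μ : Measure (SConf d)) : Prop :=
  ∀ (V : Finset (Site d)) (A B : Set (SConf d)), MeasurableSet A →
    MeasurableSet[cylσ Spin ((↑V : Set (Site d))ᶜ)] B →
    ∫⁻ x in B, δ V x A ∂μ = μ (A ∩ B)

/-- The conditional specification
`γ_V^y(x, A) ∝ ∫ 1_A(z) ∏_{v∈V} e^{β_v y_v z_v} γ_V(x, dz)`. -/
def condSpinKer {d : ℕ} (γ : Finset (Site d) → SConf d → Measure (SConf d))
    (β : Site d → ℝ) (y : SConf d) (V : Finset (Site d)) (x : SConf d) :
    Measure (SConf d) :=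
  let ρ := (γ V x).withDensity fun z =>
    ENNReal.ofReal (Real.exp (∑ v ∈ V, β v * (y v : ℝ) * (z v : ℝ)))
  (ρ Set.univ)⁻¹ • ρ

/-- The maximal configuration `𝐛+`. -/
def bpos {d : ℕ} : SConf d := fun _ => ⟨1, by norm_num⟩

/-- The minimal configuration `𝐛−`. -/
def bneg {d : ℕ} : SConf d := fun _ => ⟨-1, by norm_num⟩

lemma measurable_eval_cyl {S : Set (Site d)} {v : Site d} (hv : v ∈ S) :
    Measurable[cylσ E S] (fun x : Conf E d => x v) := by
  apply Measurable.of_comap_le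
  exact le_iSup₂_of_le v hv le_rfl

lemma cyl_le (S : Set (Site d)) : cylσ E S ≤ MeasurableSpace.pi := by
  refine iSup₂_le fun v _ => ?_
  exact (measurable_pi_apply v).comap_le

lemma cyl_le_comap (S : Set (Site d)) :
    cylσ E S ≤ MeasurableSpace.comap (S.domRestrict : Conf E d → _) ⊤ := by
  refine iSup₂_le fun v hv => ?_
  rintro _ ⟨t, _, rfl⟩
  exact ⟨{y | y ⟨v, hv⟩ ∈ t}, trivial, rfl⟩

lemma cyl_dep {S : Set (Site d)} {f : Conf E d → ENNReal} (hf : Measurable[cylσ E S] f)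
    {x z : Conf E d} (h : ∀ v ∈ S, x v = z v) : f x = f z := by
  have h1 : MeasurableSet[cylσ E S] (f ⁻¹' {f x}) := hf (measurableSet_singleton _)
  obtain ⟨T, -, hT⟩ := cyl_le_comap S _ h1
  have h2 : S.domRestrict x = S.domRestrict z := by
    ext v; exact h v v.2
  have h3 : x ∈ f ⁻¹' {f x} := rfl
  rw [← hT, Set.mem_preimage, h2, ← Set.mem_preimage, hT] at h3
  exact h3.symm

lemma bdry_finite (V : Finset (Site d)) : (bdry V).Finite := by
  have : bdry V ⊆ ⋃ v ∈ V, Set.Icc (v - 1) (v + 1) := by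
    rintro w ⟨-, v, hv, hvw⟩
    simp only [Set.mem_iUnion]
    refine ⟨v, hv, ?_⟩
    have h : ∀ i, (v i - w i).natAbs ≤ 1 := fun i => by
      rw [← (show _ = 1 from hvw)]
      exact Finset.single_le_sum (f := fun i => (v i - w i).natAbs) (fun _ _ => Nat.zero_le _)
        (Finset.mem_univ i)
    constructor <;> intro i <;> have := h i <;> simp <;> omega
  exact (Set.Finite.biUnion V.finite_toSet fun v _ => Set.finite_Icc _ _).subset this

section spec
variable {γ : Finset (Site d) → SConf d → Measure (SConf d)}

lemma spec_meas (hγ : IsSpecification γ) (V : Finset (Site d)) : Measurable (γ V) :=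
  Measure.measurable_of_measurable_coe _ (hγ.kernel V)

lemma proper_ae (hγ : IsSpecification γ) (V : Finset (Site d)) (x : SConf d) :
    ∀ᵐ z ∂(γ V x), ∀ v, v ∉ V → z v = x v := by
  rw [ae_all_iff]
  intro v
  by_cases hv : v ∈ V
  · simp [hv]
  simp only [hv, not_false_eq_true, forall_const]
  have := hγ.prob V x
  have hm : MeasurableSet[cylσ Spin ((↑V : Set (Site d))ᶜ)] {z : SConf d | z v = x v} :=
    measurable_eval_cyl (E := Spin) (S := (↑V : Set (Site d))ᶜ) (v := v) (by simpa using hv)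
      (measurableSet_singleton (x v))
  have h := hγ.proper V _ hm x
  rw [Set.indicator_of_mem (by simp)] at h
  rw [ae_iff]
  exact (prob_compl_eq_zero_iff (cyl_le _ _ hm)).2 h

lemma inter_eq (hγ : IsSpecification γ) (V : Finset (Site d)) (x : SConf d) {A B : Set (SConf d)}
    (hB : MeasurableSet[cylσ Spin ((↑V : Set (Site d))ᶜ)] B) :
    γ V x (A ∩ B) = B.indicator (fun x => γ V x A) x := by
  have := hγ.prob V x
  have h := hγ.proper V _ hB x
  by_cases hx : x ∈ B
  · rw [Set.indicator_of_mem hx] at *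
    have h0 := (prob_compl_eq_zero_iff (cyl_le _ _ hB)).2 h
    apply measure_congr
    have : ∀ᵐ z ∂(γ V x), z ∈ B := h0
    filter_upwards [this] with z hz
    apply propext
    exact ⟨fun h => h.1, fun h => ⟨h, hz⟩⟩
  · rw [Set.indicator_of_notMem hx] at *
    exact measure_mono_null Set.inter_subset_right h

lemma specified_of (hγ : IsSpecification γ) {μ : Measure (SConf d)}
    (h : ∀ V A, MeasurableSet A → ∫⁻ x, γ V x A ∂μ = μ A) : SpecifiedBy γ μ := by
  intro V A B hA hB
  rw [← lintegral_indicator (cyl_le _ _ hB), ← h V _ (hA.inter (cyl_le _ _ hB))]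
  exact lintegral_congr fun x => (inter_eq hγ V x hB).symm

lemma stat_of {μ : Measure (SConf d)} (h : SpecifiedBy γ μ) (V) (A : Set (SConf d))
    (hA : MeasurableSet A) : ∫⁻ x, γ V x A ∂μ = μ A := by
  have := h V A Set.univ hA (@MeasurableSet.univ _ (_))
  simpa using this

lemma integrable_of_bdd {f : SConf d → ℝ} (hf : Measurable f) (hb : Bdd f) (μ : Measure (SConf d))
    [IsProbabilityMeasure μ] : Integrable f μ := by
  obtain ⟨C, hC⟩ := hb
  exact Integrable.of_bound hf.aestronglyMeasurable C (ae_of_all _ hC)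

lemma integral_stat (hγ : IsSpecification γ) {V : Finset (Site d)} {μ : Measure (SConf d)}
    [IsProbabilityMeasure μ]
    (h : ∀ A, MeasurableSet A → ∫⁻ x, γ V x A ∂μ = μ A) {f : SConf d → ℝ} (hf : Measurable f)
    (hb : Bdd f) : Integrable (fun x => ∫ z, f z ∂(γ V x)) μ ∧
      ∫ x, ∫ z, f z ∂(γ V x) ∂μ = ∫ x, f x ∂μ := by
  let η : ProbabilityTheory.Kernel (SConf d) (SConf d) := ⟨γ V, spec_meas hγ V⟩
  have : ProbabilityTheory.IsMarkovKernel η := ⟨hγ.prob V⟩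
  let κ := ProbabilityTheory.Kernel.const Unit μ
  have e : (η.comp κ) () = μ := by
    ext A hA
    rw [ProbabilityTheory.Kernel.comp_apply' _ _ _ hA]
    exact h A hA
  have hi : Integrable f ((η.comp κ) ()) := by rw [e]; exact integrable_of_bdd hf hb μ
  refine ⟨hi.integral_comp, ?_⟩
  have := ProbabilityTheory.Kernel.integral_comp hi
  rw [e] at this
  exact this.symm

lemma local_cont {f : SConf d → ℝ} (hf : IsLocal f) : Continuous f := by
  obtain ⟨S, hS⟩ := hf
  rw [continuous_iff_continuousAt]
  intro x
  have : ∀ᶠ z in nhds x, ∀ v ∈ S, z v = x v := by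
    rw [Filter.eventually_all_finset]
    intro v _
    have hc : Continuous (fun z : SConf d => z v) := continuous_apply v
    exact hc.continuousAt.eventually (p := fun s => s = x v) (by rw [nhds_discrete]; simp)
  refine (tendsto_const_nhds (x := f x)).congr' ?_
  filter_upwards [this] with z hz
  exact (hS z x hz).symm

lemma local_spec (hγ : IsSpecification γ) (V : Finset (Site d)) {A : Set (SConf d)}
    (hA : A ∈ measurableCylinders (fun _ : Site d => Spin)) :
    IsLocal (fun x => (γ V x).real A) := by
  classical
  obtain ⟨S, T, hT, rfl⟩ := (mem_measurableCylinders _).1 hA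
  refine ⟨S ∪ (bdry_finite V).toFinset, fun x y hxy => ?_⟩
  let φ : SConf d → SConf d → SConf d := fun x z v => if v ∈ V then z v else x v
  have hφ : ∀ x, Measurable[cylσ Spin (↑V : Set (Site d))] (φ x) := by
    intro x
    rw [@measurable_pi_iff]
    intro v
    by_cases hv : v ∈ V
    · simp only [φ, hv, if_true]
      exact measurable_eval_cyl (by simpa using hv)
    · simp only [φ, hv, if_false]
      exact measurable_const
  have key : ∀ x, γ V x (cylinder S T) = γ V x (φ x ⁻¹' cylinder S T) := by
    intro x
    apply measure_congr
    filter_upwards [proper_ae hγ V x] with z hz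
    have : φ x z = z := by
      ext v
      by_cases hv : v ∈ V
      · simp [φ, hv]
      · simp [φ, hv, hz v hv]
    apply propext
    change z ∈ cylinder S T ↔ φ x z ∈ cylinder S T
    rw [this]
  have e : φ x ⁻¹' cylinder S T = φ y ⁻¹' cylinder S T := by
    ext z
    simp only [Set.mem_preimage, mem_cylinder]
    have : S.restrict (φ x z) = S.restrict (φ y z) := by
      ext v
      simp only [Finset.restrict, φ, hxy v (Finset.mem_union_left _ v.2)]
    rw [this]
  have hm := hγ.bdryMeas V _ (hφ y (MeasurableSet.cylinder S hT))
  have : γ V x (cylinder S T) = γ V y (cylinder S T) := by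
    rw [key x, key y, e]
    exact cyl_dep hm fun v hv => hxy v (Finset.mem_union_right _ (by simpa using hv))
  simp [Measure.real, this]

lemma local_ind {A : Set (SConf d)} (hA : A ∈ measurableCylinders (fun _ : Site d => Spin)) :
    IsLocal (A.indicator fun _ => (1 : ℝ)) := by
  classical
  obtain ⟨S, T, hT, rfl⟩ := (mem_measurableCylinders _).1 hA
  refine ⟨S, fun x y hxy => ?_⟩
  have : S.restrict x = S.restrict y := by
    ext v
    simp only [Finset.restrict, hxy v v.2]
  simp only [Set.indicator, mem_cylinder, this]

lemma exists_limit (hγ : IsSpecification γ) (x : SConf d) :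
    ∃ (P : Measure (SConf d)) (U : Filter (Finset (Site d))), IsProbabilityMeasure P ∧ U.NeBot ∧
      U ≤ atTop ∧ SpecifiedBy γ P ∧ ∀ f : SConf d → ℝ, Bdd f → IsLocal f →
        Tendsto (fun V => ∫ z, f z ∂(γ V x)) U (nhds (∫ z, f z ∂P)) := by
  let ν : Finset (Site d) → ProbabilityMeasure (SConf d) := fun V => ⟨γ V x, hγ.prob V x⟩
  let U : Ultrafilter (Finset (Site d)) := Ultrafilter.of atTop
  have hU : (U : Filter (Finset (Site d))) ≤ atTop := Ultrafilter.of_le atTop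
  obtain ⟨P, -, hP⟩ := isCompact_univ.ultrafilter_le_nhds (U.map ν) (by simp)
  have hP' : Tendsto ν U (nhds P) := hP
  rw [ProbabilityMeasure.tendsto_iff_forall_integral_tendsto] at hP'
  have lim : ∀ f : SConf d → ℝ, Bdd f → IsLocal f →
      Tendsto (fun V => ∫ z, f z ∂(γ V x)) U (nhds (∫ z, f z ∂(P : Measure (SConf d)))) := by
    intro f ⟨C, hC⟩ hl
    exact hP' (BoundedContinuousFunction.ofNormedAddCommGroup f (local_cont hl) C hC)
  refine ⟨P, U, inferInstance, inferInstance, hU, specified_of hγ fun V A hA => ?_, lim⟩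
  have hk := spec_meas hγ V
  have hprob : IsProbabilityMeasure (Measure.bind (P : Measure (SConf d)) (γ V)) := by
    constructor
    rw [Measure.bind_apply MeasurableSet.univ hk.aemeasurable]
    have : ∀ z, γ V z Set.univ = 1 := fun z => (hγ.prob V z).measure_univ
    simp [this]
  have : Measure.bind (P : Measure (SConf d)) (γ V) = P := by
    refine ext_of_generate_finite _ generateFrom_measurableCylinders.symm
      isPiSystem_measurableCylinders (fun A hA => ?_) (by simp)
    have hAm := MeasurableSet.of_mem_measurableCylinders hA
    have hp := fun z => hγ.prob V z
    have hind : ∀ z, |A.indicator (fun _ => (1 : ℝ)) z| ≤ 1 := fun z => by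
      by_cases hz : z ∈ A <;> simp [hz]
    have l1 := lim _ ⟨1, fun z => ?_⟩ (local_spec hγ V hA)
    have l2 := lim _ ⟨1, hind⟩ (local_ind hA)
    · have heq : ∀ᶠ W in (U : Filter (Finset (Site d))),
          ∫ z, (γ V z).real A ∂(γ W x) = ∫ z, A.indicator (fun _ => (1 : ℝ)) z ∂(γ W x) := by
        filter_upwards [hU (eventually_ge_atTop V)] with W hW
        have := hγ.prob W x
        rw [← (integral_stat hγ (hγ.consistent W V hW · · x) (f := A.indicator fun _ => (1 : ℝ))
          (measurable_const.indicator hAm) ⟨1, hind⟩).2]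
        simp [integral_indicator_const _ hAm]
      have h := tendsto_nhds_unique (l1.congr' heq) l2
      rw [Measure.bind_apply hAm hk.aemeasurable]
      have h1 : ∫ z, (γ V z).real A ∂(P : Measure (SConf d))
          = (∫⁻ z, γ V z A ∂(P : Measure (SConf d))).toReal :=
        integral_toReal (hγ.kernel V A hAm).aemeasurable (ae_of_all _ fun z => measure_lt_top _ _)
      rw [h1, integral_indicator_const _ hAm] at h
      rw [← Measure.bind_apply hAm hk.aemeasurable] at h ⊢
      rw [← ENNReal.toReal_eq_toReal_iff' (measure_ne_top _ _) (measure_ne_top _ _), h]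
      simp [Measure.real]
    · rw [abs_of_nonneg measureReal_nonneg]; exact measureReal_le_one
  rw [← Measure.bind_apply hA hk.aemeasurable, this]

lemma bneg_le (x : SConf d) : bneg ≤ x := by
  intro v
  rcases (x v).2 with h | h
  · exact le_of_eq (Subtype.ext h.symm)
  · change (-1 : ℝ) ≤ (x v : ℝ)
    rw [show (x v : ℝ) = 1 from h]; norm_num

lemma le_bpos (x : SConf d) : x ≤ bpos := by
  intro v
  rcases (x v).2 with h | h
  · change (x v : ℝ) ≤ (1 : ℝ)
    rw [show (x v : ℝ) = -1 from h]; norm_num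
  · exact le_of_eq (Subtype.ext h)

lemma lower (hγ : IsSpecification γ) (hmono : MonotoneSpec γ) {V : Finset (Site d)}
    {μ : Measure (SConf d)} [IsProbabilityMeasure μ]
    (h : ∀ A, MeasurableSet A → ∫⁻ x, γ V x A ∂μ = μ A) {f : SConf d → ℝ} (hf : Measurable f)
    (hm : Monotone f) (hb : Bdd f) :
    ∫ z, f z ∂(γ V bneg) ≤ ∫ z, f z ∂μ ∧ ∫ z, f z ∂μ ≤ ∫ z, f z ∂(γ V bpos) := by
  obtain ⟨hi, he⟩ := integral_stat hγ h hf hb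
  have hM := hmono V f hf hm hb
  rw [← he]
  constructor
  · have := integral_mono (integrable_const (μ := μ) (∫ z, f z ∂(γ V bneg))) hi
      (fun x => hM (bneg_le x))
    simpa using this
  · have := integral_mono hi (integrable_const (μ := μ) (∫ z, f z ∂(γ V bpos)))
      (fun x => hM (le_bpos x))
    simpa using this

lemma tendsto_of_sub {ι : Type*} [Preorder ι] {F : ι → ℝ} (hF : Monotone F)
    {C : ℝ} (hC : ∀ i, F i ≤ C) {U : Filter ι} [U.NeBot] (hU : U ≤ atTop) {a : ℝ}
    (h : Tendsto F U (nhds a)) : Tendsto F atTop (nhds a) := by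
  have h1 := tendsto_atTop_ciSup hF ⟨C, by rintro _ ⟨i, rfl⟩; exact hC i⟩
  rwa [tendsto_nhds_unique h (h1.mono_left hU)]

def upSet (S : Finset (Site d)) : Set (SConf d) := {x | ∀ v ∈ S, x v = ⟨1, by norm_num⟩}

lemma upSet_cyl (S : Finset (Site d)) :
    MeasurableSet (upSet S) := by
  have : upSet S = ⋂ v ∈ S, (fun x : SConf d => x v) ⁻¹' {⟨1, by norm_num⟩} := by
    ext x; simp [upSet]
  rw [this]
  exact Finset.measurableSet_biInter _ fun v _ => measurable_pi_apply v (measurableSet_singleton _)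

lemma gen_upSet : (MeasurableSpace.pi : MeasurableSpace (SConf d)) =
    MeasurableSpace.generateFrom (Set.range upSet) := by
  apply le_antisymm
  · refine iSup_le fun v => ?_
    apply Measurable.comap_le
    have h1 : MeasurableSet[MeasurableSpace.generateFrom (Set.range upSet)]
        ((fun x : SConf d => x v) ⁻¹' {⟨1, by norm_num⟩}) := by
      apply MeasurableSpace.measurableSet_generateFrom
      refine ⟨{v}, ?_⟩
      ext x; simp [upSet]
    refine @measurable_to_countable' _ _ _ _ (_) _ fun y => ?_
    by_cases hy : y = ⟨1, by norm_num⟩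
    · rw [hy]; exact h1
    · convert h1.compl using 1
      ext x
      simp only [Set.mem_preimage, Set.mem_singleton_iff, Set.mem_compl_iff]
      constructor
      · rintro h h'; exact hy (h.symm.trans h')
      · intro h
        have e : ∀ s : Spin, s ≠ ⟨1, by norm_num⟩ → (s : ℝ) = -1 := fun s hs => by
          rcases s.2 with h | h
          · exact h
          · exact absurd (Subtype.ext (Set.mem_singleton_iff.1 h)) hs
        exact Subtype.ext ((e _ h).trans (e _ hy).symm)
  · apply MeasurableSpace.generateFrom_le
    rintro _ ⟨S, rfl⟩
    exact upSet_cyl S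

lemma pi_upSet : IsPiSystem (Set.range (upSet (d := d))) := by
  classical
  rintro _ ⟨S, rfl⟩ _ ⟨T, rfl⟩ -
  refine ⟨S ∪ T, ?_⟩
  ext x
  simp only [upSet, Finset.mem_union, Set.mem_setOf_eq, Set.mem_inter_iff]
  exact ⟨fun h => ⟨fun v hv => h v (.inl hv), fun v hv => h v (.inr hv)⟩,
    fun h v hv => hv.elim (h.1 v) (h.2 v)⟩

lemma ext_mono {μ ν : Measure (SConf d)} [IsProbabilityMeasure μ] [IsProbabilityMeasure ν]
    (h : ∀ f : SConf d → ℝ, Measurable f → Monotone f → Bdd f → IsLocal f →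
      ∫ z, f z ∂μ = ∫ z, f z ∂ν) : μ = ν := by
  classical
  refine ext_of_generate_finite _ gen_upSet pi_upSet ?_ (by simp)
  rintro _ ⟨S, rfl⟩
  have := h ((upSet S).indicator fun _ => (1 : ℝ)) (measurable_const.indicator (upSet_cyl S)) ?_
    ⟨1, fun z => ?_⟩ ⟨S, fun x y hxy => ?_⟩
  · rw [integral_indicator_const _ (upSet_cyl S), integral_indicator_const _ (upSet_cyl S)] at this
    rw [← ENNReal.toReal_eq_toReal_iff' (measure_ne_top _ _) (measure_ne_top _ _)]
    simpa [Measure.real] using this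
  · intro x y hxy
    by_cases hx : x ∈ upSet S
    · have hy : y ∈ upSet S := fun v hv => le_antisymm (le_bpos y v) ((hx v hv) ▸ hxy v)
      simp [hx, hy]
    · rw [Set.indicator_of_notMem hx]
      exact Set.indicator_nonneg (fun _ _ => zero_le_one) _
  · by_cases hz : z ∈ upSet S <;> simp [hz]
  · have : x ∈ upSet S ↔ y ∈ upSet S :=
      forall₂_congr fun v hv => by rw [hxy v hv]
    simp only [Set.indicator, this]

end spec

/-- **Lemma 5.12 (maximal and minimal random fields).**  A monotone specification admits a
minimal and a maximal specified random field `P_−, P_+`, obtained as monotone limits of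
`γ_V f` evaluated at the constant configurations `𝐛−, 𝐛+`, these bracket every specified
random field, and uniqueness holds iff `P_+ = P_−`. -/
theorem statement18 {d : ℕ} (γ : Finset (Site d) → SConf d → Measure (SConf d))
    (hγ : IsSpecification γ) (hmono : MonotoneSpec γ) :
    ∃ Pm Pp : Measure (SConf d),
      IsProbabilityMeasure Pm ∧ IsProbabilityMeasure Pp ∧
      SpecifiedBy γ Pm ∧ SpecifiedBy γ Pp ∧
      (∀ f : SConf d → ℝ, Measurable f → Monotone f → Bdd f → IsLocal f →
        (Monotone fun V : Finset (Site d) => ∫ z, f z ∂(γ V bneg)) ∧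
        Tendsto (fun V : Finset (Site d) => ∫ z, f z ∂(γ V bneg)) atTop
          (nhds (∫ z, f z ∂Pm)) ∧
        (Antitone fun V : Finset (Site d) => ∫ z, f z ∂(γ V bpos)) ∧
        Tendsto (fun V : Finset (Site d) => ∫ z, f z ∂(γ V bpos)) atTop
          (nhds (∫ z, f z ∂Pp)) ∧
        ∀ μ : Measure (SConf d), IsProbabilityMeasure μ → SpecifiedBy γ μ →
          ∫ z, f z ∂Pm ≤ ∫ z, f z ∂μ ∧ ∫ z, f z ∂μ ≤ ∫ z, f z ∂Pp) ∧
      ((∃! μ : Measure (SConf d), IsProbabilityMeasure μ ∧ SpecifiedBy γ μ) ↔ Pp = Pm) := by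
  obtain ⟨Pm, U, hPm, hU, hUt, hsm, hlm⟩ := exists_limit hγ bneg
  obtain ⟨Pp, U', hPp, hU', hUt', hsp, hlp⟩ := exists_limit hγ bpos
  have main : ∀ f : SConf d → ℝ, Measurable f → Monotone f → Bdd f → IsLocal f →
        (Monotone fun V : Finset (Site d) => ∫ z, f z ∂(γ V bneg)) ∧
        Tendsto (fun V : Finset (Site d) => ∫ z, f z ∂(γ V bneg)) atTop
          (nhds (∫ z, f z ∂Pm)) ∧
        (Antitone fun V : Finset (Site d) => ∫ z, f z ∂(γ V bpos)) ∧
        Tendsto (fun V : Finset (Site d) => ∫ z, f z ∂(γ V bpos)) atTop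
          (nhds (∫ z, f z ∂Pp)) ∧
        ∀ μ : Measure (SConf d), IsProbabilityMeasure μ → SpecifiedBy γ μ →
          ∫ z, f z ∂Pm ≤ ∫ z, f z ∂μ ∧ ∫ z, f z ∂μ ≤ ∫ z, f z ∂Pp := by
    intro f hf hm hb hl
    have m1 : Monotone fun V : Finset (Site d) => ∫ z, f z ∂(γ V bneg) := by
      intro W V hWV
      have := hγ.prob V bneg
      exact (lower hγ hmono (hγ.consistent V W hWV · · bneg) hf hm hb).1
    have m2 : Antitone fun V : Finset (Site d) => ∫ z, f z ∂(γ V bpos) := by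
      intro W V hWV
      have := hγ.prob V bpos
      exact (lower hγ hmono (hγ.consistent V W hWV · · bpos) hf hm hb).2
    have br := fun (μ : Measure (SConf d)) (_ : IsProbabilityMeasure μ) (h : SpecifiedBy γ μ) V =>
      lower hγ hmono (stat_of h V) hf hm hb
    have t1 := tendsto_of_sub m1 (fun V => (br Pm hPm hsm V).1) hUt (hlm f hb hl)
    have t2 := (tendsto_of_sub m2.neg (fun V => neg_le_neg (br Pp hPp hsp V).2) hUt'
      (hlp f hb hl).neg).neg
    simp only [Pi.neg_apply, neg_neg] at t2
    refine ⟨m1, t1, m2, t2, fun μ hμ hs => ⟨?_, ?_⟩⟩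
    · exact le_of_tendsto' t1 fun V => (br μ hμ hs V).1
    · exact ge_of_tendsto' t2 fun V => (br μ hμ hs V).2
  refine ⟨Pm, Pp, hPm, hPp, hsm, hsp, main, ?_, ?_⟩
  · intro h
    exact h.unique ⟨hPp, hsp⟩ ⟨hPm, hsm⟩
  · intro h
    refine ⟨Pm, ⟨hPm, hsm⟩, ?_⟩
    rintro μ ⟨hμ, hs⟩
    refine ext_mono fun f hf hm hb hl => ?_
    obtain ⟨h1, h2⟩ := (main f hf hm hb hl).2.2.2.2 μ hμ hs
    rw [h] at h2
    exact le_antisymm h2 h1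

end RandomField
end
end
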